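/- Let q be a power of a prime p, let k be an even positive integer with gcd(k/2, q−1) = 1, let a ∈ F_q^*, let χ, χ₁, χ₂ be the canonical additive characters of F_q, F_{q^2}, F_{q^k}, and for b ∈ F_{q^k} set Λ(b) = Σ_{x ∈ F_{q^k}} Σ_{y ∈ F_q^*} Σ_{z ∈ F_q^*} χ(ay) χ₁(y·x^{(q^k−1)/(q^2−1)}) χ₂(bzx). Then as b runs over F_{q^k}^*, Λ(b) takes the value (−q² + (−1)^{k/2} q^{k/2+2})/(q+1) exactly (q^k−1)/(q+1) times and the value (−q² + (−1)^{k/2−1} q^{k/2+1})/(q+1) exactly q(q^k−1)/(q+1) times. -/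

import Mathlib

open scoped BigOperators

/-!
Write `m = k / 2` and `N` for the norm from `F_{q^k}` to `F_{q²}`. Rescaling `x` by a unit `z` of
`F_q` multiplies `N x` by `z ^ m`, and `z ↦ z ^ m` permutes the units because `m` is prime to
`q - 1`; this collapses `Λ(b)` to `-q ∑ χ₂ (b x)` over the `x` with `Tr (N x) = 0`. Those `x` are
`0` and a single coset of the group of `(q + 1)`-th powers, so `Λ(b)` is an affine function of a
Weil sum `W(c) = ∑ χ₂ (c x ^ (q + 1))`.

Since `-1` is a `(q + 1)`-th power, `W(c)² = W(c) W(-c)`, and this product is `q ^ k` times the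
number of zeros of a `q²`-linearized binomial, which is `1` or `q²`. Hence `W(c)` is one of
`± q ^ m`, `± q ^ (m + 1)`. As `W(c) ≡ 1` and `-q ≡ 1` modulo `q + 1` in the algebraic integers,
`W(c)` must be `(-q) ^ m` or `(-q) ^ (m + 1)`. How often each occurs follows from
`∑ W(c) = 0` over `c ≠ 0`.
-/

section CyclicGroup

open scoped Finset

variable {G : Type*} [CommGroup G] [IsCyclic G]

theorem exists_pow_eq_iff_pow_card_div_eq_one [Finite G] {d : ℕ} (hd : d ∣ Nat.card G) (u : G) :
    (∃ v : G, v ^ d = u) ↔ u ^ (Nat.card G / d) = 1 := by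
  obtain ⟨n, hn⟩ := hd
  have hd_pos : 0 < d := Nat.pos_of_mul_pos_right (hn ▸ Nat.card_pos)
  rw [hn, Nat.mul_div_cancel_left _ hd_pos]
  have range_le_ker : (powMonoidHom d : G →* G).range ≤ (powMonoidHom n : G →* G).ker := by
    rintro _ ⟨v, rfl⟩
    rw [MonoidHom.mem_ker, powMonoidHom_apply, powMonoidHom_apply, ← pow_mul, ← hn,
      pow_card_eq_one']
  have range_eq_ker : (powMonoidHom d : G →* G).range = (powMonoidHom n : G →* G).ker := by
    refine Subgroup.eq_of_le_of_card_ge range_le_ker ?_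
    rw [IsCyclic.card_powMonoidHom_range, IsCyclic.card_powMonoidHom_ker, hn,
      Nat.gcd_mul_left_left, Nat.gcd_mul_right_left, Nat.mul_div_cancel_left _ hd_pos]
  exact SetLike.ext_iff.mp range_eq_ker u

variable [Fintype G] [DecidableEq G]

theorem card_filter_pow_eq (d : ℕ) (v : G) :
    #{u : G | u ^ d = v ^ d} = (Nat.card G).gcd d := by
  have same_card := MonoidHom.card_fiber_eq_of_mem_range (powMonoidHom d : G →* G)
    ⟨v, rfl⟩ ⟨1, map_one _⟩
  simp only [powMonoidHom_apply] at same_card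
  rw [same_card, ← IsCyclic.card_powMonoidHom_ker, ← Fintype.card_subtype,
    ← Nat.card_eq_fintype_card]
  rfl

theorem sum_comp_pow_eq_nsmul_sum {M : Type*} [AddCommMonoid M] {d : ℕ} (hd : d ∣ Nat.card G)
    (f : G → M) : ∑ v : G, f (v ^ d) = d • ∑ u : G with ∃ v, v ^ d = u, f u := by
  rw [← Finset.sum_fiberwise_of_maps_to (t := {u : G | ∃ v, v ^ d = u}) (g := (· ^ d))
    (by simp), Finset.smul_sum]
  refine Finset.sum_congr rfl fun u hu ↦ ?_
  obtain ⟨v, rfl⟩ := (Finset.mem_filter.mp hu).2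
  rw [Finset.sum_congr rfl fun x hx ↦ congrArg f (Finset.mem_filter.mp hx).2,
    Finset.sum_const, card_filter_pow_eq, Nat.gcd_eq_right hd]

end CyclicGroup

section TraceLift

variable {K L M : Type*}

/-- The lift `χ ∘ Tr_{L/K}` of an additive character `χ` of `K` to an extension `L`. -/
noncomputable def traceLift (K L : Type*) {M : Type*} [CommRing K] [CommRing L]
    [Algebra K L] [Monoid M] (χ : AddChar K M) : AddChar L M :=
  χ.compAddMonoidHom (Algebra.trace K L).toAddMonoidHom

@[simp]
theorem traceLift_apply [CommRing K] [CommRing L] [Algebra K L] [Monoid M]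
    (χ : AddChar K M) (x : L) :
    traceLift K L χ x = χ (Algebra.trace K L x) :=
  rfl

variable [Field K] [Field L] [Algebra K L]

theorem traceLift_traceLift {k : Type*} [Field k] [Algebra k K] [Algebra k L] [IsScalarTower k K L]
    [FiniteDimensional k K] [FiniteDimensional K L] [Monoid M] (χ : AddChar k M) :
    traceLift K L (traceLift k K χ) = traceLift k L χ := by
  ext x
  simp only [traceLift_apply, Algebra.trace_trace]

theorem isPrimitive_traceLift [FiniteDimensional K L] [Algebra.IsSeparable K L] [CommMonoid M]
    {χ : AddChar K M} (hχ : χ.IsPrimitive) : (traceLift K L χ).IsPrimitive := by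
  obtain ⟨t, ht⟩ : ∃ t, χ t ≠ 1 := by
    simpa using AddChar.ne_one_iff.mp (hχ one_ne_zero)
  obtain ⟨x, rfl⟩ := Algebra.trace_surjective K L t
  exact AddChar.IsPrimitive.of_ne_one (AddChar.ne_one_iff.mpr ⟨x, ht⟩)

/-- The canonical additive character `x ↦ exp (2πi Tr(x) / p)` of an algebra `K` over
`ZMod p`. -/
noncomputable def canonicalAddChar (p : ℕ) [NeZero p] (K : Type*) [CommRing K]
    [Algebra (ZMod p) K] : AddChar K ℂ :=
  traceLift (ZMod p) K ZMod.stdAddChar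

theorem eq_canonicalAddChar {p : ℕ} [NeZero p] [Algebra (ZMod p) K] {χ : AddChar K ℂ}
    (hχ : ∀ x : K, χ x =
      Complex.exp (2 * Real.pi * Complex.I * ((Algebra.trace (ZMod p) K x).val : ℂ) / p)) :
    χ = canonicalAddChar p K := by
  ext x
  rw [hχ, canonicalAddChar, traceLift_apply, ZMod.stdAddChar_apply, ZMod.toCircle_apply]

variable (p : ℕ) [Fact p.Prime]

theorem isPrimitive_canonicalAddChar [Finite K] [Algebra (ZMod p) K] :
    (canonicalAddChar p K).IsPrimitive :=
  isPrimitive_traceLift (ZMod.isPrimitive_stdAddChar p)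

theorem traceLift_canonicalAddChar [Finite K] [Finite L] [Algebra (ZMod p) K] [Algebra (ZMod p) L] :
    traceLift K L (canonicalAddChar p K) = canonicalAddChar p L :=
  have : IsScalarTower (ZMod p) K L := .of_algebraMap_eq' (Subsingleton.elim _ _)
  traceLift_traceLift _

end TraceLift

section FiniteField

variable {K F : Type*} [Field K] [Fintype K] [Field F] [Algebra K F]

local notation "q" => Fintype.card K

theorem add_pow_card (x y : F) : (x + y) ^ q = x ^ q + y ^ q :=
  map_add (FiniteField.frobeniusAlgHom K F) x y

variable (F) in
theorem neg_one_pow_card_sub_one : (-1 : F) ^ (q - 1) = 1 := by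
  rw [← map_one (algebraMap K F), ← map_neg, ← map_pow,
    FiniteField.pow_card_sub_one_eq_one _ (neg_ne_zero.mpr one_ne_zero)]

theorem pow_card_bijective [Algebra.IsAlgebraic K F] : Function.Bijective fun x : F ↦ x ^ q :=
  (FiniteField.frobeniusAlgEquivOfAlgebraic K F).bijective

theorem trace_pow_card [Algebra.IsAlgebraic K F] (x : F) :
    Algebra.trace K F (x ^ q) = Algebra.trace K F x :=
  Algebra.trace_eq_of_algEquiv (FiniteField.frobeniusAlgEquivOfAlgebraic K F) x

theorem traceLift_pow_card [Algebra.IsAlgebraic K F] {M : Type*} [Monoid M] (χ : AddChar K M)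
    (x : F) : traceLift K F χ (x ^ q) = traceLift K F χ x := by
  rw [traceLift_apply, trace_pow_card, traceLift_apply]

theorem sum_eq_add_sum_units [Fintype F] [DecidableEq F] {M : Type*} [AddCommMonoid M]
    (f : F → M) : ∑ x, f x = f 0 + ∑ u : Fˣ, f u := by
  rw [Fintype.sum_eq_add_sum_subtype_ne f 0, ← unitsEquivNeZero.sum_comp]
  rfl

variable [Finite F]

theorem trace_eq_zero_of_pow_card_eq_neg (h : Even (Module.finrank K F)) {x : F}
    (hx : x ^ q = -x) : Algebra.trace K F x = 0 := by
  have pow_card_pow (i : ℕ) : x ^ q ^ i = (-1) ^ i * x := by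
    induction i with
    | zero => simp
    | succ i ih =>
      have neg_one_pow_card : (-1 : F) ^ q = -1 := by
        rw [← Nat.sub_add_cancel Fintype.card_pos, pow_succ, neg_one_pow_card_sub_one F, one_mul]
      rw [pow_succ, pow_mul, ih, mul_pow, hx, pow_right_comm, neg_one_pow_card]
      ring
  apply (algebraMap K F).injective
  rw [FiniteField.algebraMap_trace_eq_sum_pow, map_zero, Nat.card_eq_fintype_card]
  simp_rw [pow_card_pow]
  rw [← Finset.sum_mul, neg_one_geom_sum, if_pos h, zero_mul]

theorem trace_eq_zero_iff_pow_card_eq_neg (h : Module.finrank K F = 2) (x : F) :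
    Algebra.trace K F x = 0 ↔ x ^ q = -x := by
  refine ⟨fun hx ↦ ?_, trace_eq_zero_of_pow_card_eq_neg (h ▸ even_two)⟩
  have trace_eq := FiniteField.algebraMap_trace_eq_sum_pow K F x
  rw [hx, map_zero, h, Finset.sum_range_succ, Finset.sum_range_one, Nat.card_eq_fintype_card,
    pow_zero, pow_one, pow_one] at trace_eq
  exact eq_neg_of_add_eq_zero_right trace_eq.symm

theorem card_sq_sub_one_dvd_card_units (h : Even (Module.finrank K F)) :
    q ^ 2 - 1 ∣ Nat.card Fˣ := by
  obtain ⟨m, hm⟩ := even_iff_exists_two_mul.mp h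
  rw [Nat.card_units, Module.natCard_eq_pow_finrank (K := K), hm, pow_mul, Nat.card_eq_fintype_card]
  simpa using Nat.sub_dvd_pow_sub_pow (q ^ 2) 1 m

theorem card_add_one_mul_card_sub_one_dvd_card_units (h : Even (Module.finrank K F)) :
    (q + 1) * (q - 1) ∣ Nat.card Fˣ := by
  simpa [Nat.sq_sub_sq q 1] using card_sq_sub_one_dvd_card_units h

theorem card_add_one_dvd_card_units (h : Even (Module.finrank K F)) : q + 1 ∣ Nat.card Fˣ :=
  dvd_of_mul_right_dvd (card_add_one_mul_card_sub_one_dvd_card_units h)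

theorem exists_pow_card_add_one_eq_neg_one (h : Even (Module.finrank K F)) :
    ∃ v : Fˣ, v ^ (q + 1) = -1 := by
  rw [exists_pow_eq_iff_pow_card_div_eq_one (card_add_one_dvd_card_units h)]
  obtain ⟨n, hn⟩ := card_add_one_mul_card_sub_one_dvd_card_units h
  rw [hn, mul_assoc, Nat.mul_div_cancel_left _ (Nat.succ_pos q), pow_mul]
  ext
  simp [neg_one_pow_card_sub_one F]

section

variable {M : Type*} [Monoid M]

theorem traceLift_eq_one_of_mul_add_eq_zero (χ : AddChar K M) (h : Even (Module.finrank K F))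
    {c u : F} (hu : c * u + c ^ q * u ^ q ^ 2 = 0) : traceLift K F χ (c * u ^ (q + 1)) = 1 := by
  have pow_card_eq_neg : (c * u ^ (q + 1)) ^ q = -(c * u ^ (q + 1)) := by
    linear_combination (exp := 1) u ^ q * hu
  rw [traceLift_apply, trace_eq_zero_of_pow_card_eq_neg h pow_card_eq_neg,
    AddChar.map_zero_eq_one]

theorem traceLift_mul_pow_add_mul_traceLift_neg_mul_pow (χ : AddChar K M) (c u v : F) :
    traceLift K F χ (c * (v + u) ^ (q + 1)) * traceLift K F χ (-c * v ^ (q + 1)) =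
      traceLift K F χ (c * u ^ (q + 1)) *
        traceLift K F χ (v ^ q * (c * u + c ^ q * u ^ q ^ 2)) := by
  have lift_linear_term : traceLift K F χ (v ^ q * (c * u + c ^ q * u ^ q ^ 2)) =
      traceLift K F χ (c * u * v ^ q) * traceLift K F χ (c * u ^ q * v) := by
    rw [← traceLift_pow_card χ (c * u ^ q * v), ← AddChar.map_add_eq_mul]
    ring_nf
  rw [lift_linear_term]
  simp only [← AddChar.map_add_eq_mul]
  rw [pow_succ (v + u), add_pow_card]
  ring_nf

end

end FiniteField

section WeilSum

variable {K F R : Type*}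

/-- The Weil sum `∑ ψ (c x ^ (q + 1))` over an extension `F` of the field `K` with `q`
elements, as a function of the coefficient `c`. -/
def weilSum (K : Type*) {F R : Type*} [Fintype K] [Field F] [Fintype F] [CommRing R]
    (ψ : AddChar F R) (c : F) : R :=
  ∑ x, ψ (c * x ^ (Fintype.card K + 1))

variable [Fintype K] [Field F] [Fintype F] [CommRing R]

local notation "q" => Fintype.card K

theorem weilSum_zero (ψ : AddChar F R) : weilSum K ψ 0 = Fintype.card F := by
  simp [weilSum]

theorem sum_weilSum [IsDomain R] {ψ : AddChar F R} (hψ : ψ.IsPrimitive) :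
    ∑ c, weilSum K ψ c = Fintype.card F := by
  classical
  simp only [weilSum]
  rw [Finset.sum_comm]
  simp [AddChar.sum_mulShift _ hψ]

theorem sum_weilSum_ne_zero [DecidableEq F] [IsDomain R] {ψ : AddChar F R} (hψ : ψ.IsPrimitive) :
    ∑ c with c ≠ 0, weilSum K ψ c = 0 := by
  have split_zero := Finset.sum_filter_add_sum_filter_not Finset.univ (· = 0) (weilSum K ψ)
  rwa [sum_weilSum hψ, Finset.filter_eq', if_pos (Finset.mem_univ _), Finset.sum_singleton,
    weilSum_zero, add_eq_left] at split_zero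

end WeilSum

section WeilSumEvenDegree

open scoped Finset

variable {K F R : Type*} [Field K] [Fintype K] [Field F] [Fintype F] [Algebra K F]
  [CommRing R]

local notation "q" => Fintype.card K

theorem weilSum_neg (h : Even (Module.finrank K F)) (ψ : AddChar F R) (c : F) :
    weilSum K ψ (-c) = weilSum K ψ c := by
  obtain ⟨v, hv⟩ := exists_pow_card_add_one_eq_neg_one h
  have hv : (v : F) ^ (q + 1) = -1 := by simp [← Units.val_pow_eq_pow_val, hv]
  refine Fintype.sum_equiv (Units.mulLeft v) _ _ fun x ↦ ?_
  rw [Units.mulLeft_apply, mul_pow, hv, neg_one_mul, neg_mul_comm]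

variable [DecidableEq F]

theorem card_filter_mul_add_mul_pow_card_sq_eq_zero (h : Even (Module.finrank K F)) {c d : F}
    (hc : c ≠ 0) (hd : d ≠ 0) :
    #{u : F | c * u + d * u ^ q ^ 2 = 0} = 1 ∨ #{u : F | c * u + d * u ^ q ^ 2 = 0} = q ^ 2 := by
  have sq_pos : 0 < q ^ 2 := pow_pos Fintype.card_pos 2
  let w : Fˣ := -Units.mk0 c hc / Units.mk0 d hd
  have unit_root_iff (u : Fˣ) : c * u + d * u ^ q ^ 2 = 0 ↔ u ^ (q ^ 2 - 1) = w := by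
    have factor : c * u + d * (u : F) ^ q ^ 2 = u * (u ^ (q ^ 2 - 1) * d + c) := by
      rw [← Nat.sub_add_cancel sq_pos, pow_succ, Nat.add_sub_cancel]
      ring
    rw [factor, mul_eq_zero_iff_left u.ne_zero, Units.ext_iff,
      show (w : F) = -c / d by simp [w], eq_div_iff hd, Units.val_pow_eq_pow_val,
      eq_neg_iff_add_eq_zero]
  have card_eq : #{u : F | c * u + d * u ^ q ^ 2 = 0} = 1 + #{u : Fˣ | u ^ (q ^ 2 - 1) = w} := by
    simp only [Finset.card_filter]
    rw [sum_eq_add_sum_units]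
    simp [unit_root_iff]
  rw [card_eq]
  by_cases hw : ∃ v, v ^ (q ^ 2 - 1) = w
  · obtain ⟨v, hv⟩ := hw
    right
    rw [← hv, card_filter_pow_eq, Nat.gcd_eq_right (card_sq_sub_one_dvd_card_units h),
      Nat.add_sub_cancel' sq_pos]
  · left
    rw [Finset.filter_false_of_mem fun u _ hu ↦ hw ⟨u, hu⟩, Finset.card_empty]

theorem weilSum_eq_one_add (h : Even (Module.finrank K F)) (ψ : AddChar F R) (c : F) :
    weilSum K ψ c = 1 + (q + 1) * ∑ u : Fˣ with ∃ v, v ^ (q + 1) = u, ψ (c * u) := by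
  have sum_powers := sum_comp_pow_eq_nsmul_sum (card_add_one_dvd_card_units h)
    fun u : Fˣ ↦ ψ (c * u)
  simp only [Units.val_pow_eq_pow_val, nsmul_eq_mul] at sum_powers
  rw [weilSum, sum_eq_add_sum_units, sum_powers]
  simp

theorem weilSum_mul_weilSum_neg [IsDomain R] {χ : AddChar K R} (hχ : χ.IsPrimitive)
    (h : Even (Module.finrank K F)) (c : F) :
    weilSum K (traceLift K F χ) c * weilSum K (traceLift K F χ) (-c) =
      Fintype.card F * #{u : F | c * u + c ^ q * u ^ q ^ 2 = 0} := by
  set ψ := traceLift K F χ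
  have sum_shift (u : F) : ∑ v, ψ (c * (v + u) ^ (q + 1)) * ψ (-c * v ^ (q + 1)) =
      if c * u + c ^ q * u ^ q ^ 2 = 0 then (Fintype.card F : R) else 0 := by
    simp_rw [ψ, traceLift_mul_pow_add_mul_traceLift_neg_mul_pow, ← Finset.mul_sum]
    rw [pow_card_bijective.sum_comp fun w ↦ ψ (w * (c * u + c ^ q * u ^ q ^ 2)),
      AddChar.sum_mulShift _ (isPrimitive_traceLift hχ)]
    split_ifs with hu
    · rw [traceLift_eq_one_of_mul_add_eq_zero χ h hu, one_mul]
    · rw [Nat.cast_zero, mul_zero]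
  calc weilSum K ψ c * weilSum K ψ (-c)
      = ∑ v, ∑ u, ψ (c * u ^ (q + 1)) * ψ (-c * v ^ (q + 1)) := by
        rw [weilSum, weilSum, Finset.sum_mul_sum, Finset.sum_comm]
    _ = ∑ v, ∑ u, ψ (c * (v + u) ^ (q + 1)) * ψ (-c * v ^ (q + 1)) :=
        Finset.sum_congr rfl fun v _ ↦
          (Equiv.sum_comp (Equiv.addLeft v)
            fun x ↦ ψ (c * x ^ (q + 1)) * ψ (-c * v ^ (q + 1))).symm
    _ = ∑ u, if c * u + c ^ q * u ^ q ^ 2 = 0 then (Fintype.card F : R) else 0 := by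
        rw [Finset.sum_comm, Fintype.sum_congr _ _ sum_shift]
    _ = Fintype.card F * #{u : F | c * u + c ^ q * u ^ q ^ 2 = 0} := by
        rw [← Finset.sum_filter, Finset.sum_const, nsmul_eq_mul, mul_comm]

end WeilSumEvenDegree

section Integrality

theorem isIntegral_addChar_apply {A R : Type*} [AddGroup A] [Finite A] [CommRing R]
    (ψ : AddChar A R) (x : A) : IsIntegral ℤ (ψ x) := by
  refine IsIntegral.of_pow (n := Nat.card A) Nat.card_pos ?_
  rw [← AddChar.map_nsmul_eq_pow, card_nsmul_eq_zero', AddChar.map_zero_eq_one]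
  exact isIntegral_one

theorem dvd_of_isIntegral_of_mul_eq {R : Type*} [Field R] [CharZero R] {d n : ℤ} {x : R}
    (hx : IsIntegral ℤ x) (h : d * x = n) : d ∣ n := by
  obtain rfl | hd := eq_or_ne d 0
  · exact zero_dvd_iff.mpr (by simpa using h.symm)
  have x_eq : x = algebraMap ℚ R (n / d) := by
    rw [eq_comm, map_div₀, map_intCast, map_intCast, div_eq_iff (Int.cast_ne_zero.mpr hd), ← h,
      mul_comm]
  rw [x_eq, isIntegral_algebraMap_iff (algebraMap ℚ R).injective] at hx
  obtain ⟨z, hz⟩ := IsIntegrallyClosed.isIntegral_iff.mp hx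
  refine ⟨z, ?_⟩
  rw [algebraMap_int_eq, eq_intCast, eq_div_iff (Int.cast_ne_zero.mpr hd)] at hz
  exact_mod_cast hz.symm.trans (mul_comm _ _)

end Integrality

section TwoValued

open scoped Finset

theorem card_filter_of_sum_eq_zero {ι R : Type*} [Field R] [DecidableEq R] {s : Finset ι}
    {f : ι → R} {A t : R} (hA : A ≠ 0) (ht : t + 1 ≠ 0)
    (hf : ∀ i ∈ s, f i = A ∨ f i = -t * A) (hsum : ∑ i ∈ s, f i = 0) :
    (#{i ∈ s | f i = A} : R) = t * #s / (t + 1) ∧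
      (#{i ∈ s | f i = -t * A} : R) = #s / (t + 1) := by
  have filter_not : s.filter (fun i ↦ ¬ f i = A) = s.filter (fun i ↦ f i = -t * A) := by
    refine Finset.filter_congr fun i hi ↦ ⟨(hf i hi).resolve_left, fun h hA' ↦ ?_⟩
    exact mul_ne_zero ht hA (by linear_combination h - hA')
  have card_add : (#{i ∈ s | f i = A} : R) + #{i ∈ s | f i = -t * A} = #s := by
    rw [← filter_not, ← Nat.cast_add, Finset.card_filter_add_card_filter_not]
  have card_eq_mul : (#{i ∈ s | f i = A} : R) = t * #{i ∈ s | f i = -t * A} := by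
    rw [← Finset.sum_filter_add_sum_filter_not s (f · = A), filter_not,
      Finset.sum_congr rfl fun i hi ↦ (Finset.mem_filter.mp hi).2,
      Finset.sum_congr rfl fun i hi ↦ (Finset.mem_filter.mp hi).2, Finset.sum_const,
      Finset.sum_const, nsmul_eq_mul, nsmul_eq_mul] at hsum
    exact mul_right_cancel₀ hA (by linear_combination hsum)
  rw [eq_div_iff ht, eq_div_iff ht]
  exact ⟨by linear_combination card_eq_mul + t * card_add,
    by linear_combination card_add - card_eq_mul⟩

end TwoValued

section WeilSumValue

open scoped Finset

variable {K F R : Type*} [Field K] [Fintype K] [Field F] [Fintype F] [Algebra K F]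
  [Field R] [CharZero R]

local notation "q" => Fintype.card K

theorem weilSum_eq_neg_card_pow_of_sq_eq (h : Even (Module.finrank K F)) (ψ : AddChar F R) (c : F)
    {j : ℕ} (hj : weilSum K ψ c ^ 2 = ((-q : R) ^ j) ^ 2) : weilSum K ψ c = (-q : R) ^ j := by
  classical
  refine (sq_eq_sq_iff_eq_or_eq_neg.mp hj).resolve_right fun eq_neg ↦ ?_
  have dvd_neg_sub_one : (q + 1 : ℤ) ∣ -(-q) ^ j - 1 := by
    refine dvd_of_isIntegral_of_mul_eq (x := ∑ u : Fˣ with ∃ v, v ^ (q + 1) = u, ψ (c * u))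
      (IsIntegral.sum _ fun u _ ↦ isIntegral_addChar_apply ψ _) ?_
    rw [weilSum_eq_one_add h] at eq_neg
    push_cast
    linear_combination eq_neg
  have dvd_sub_one : (q + 1 : ℤ) ∣ (-q) ^ j - 1 := by
    rw [← neg_dvd, neg_add, ← sub_eq_add_neg]
    exact sub_one_dvd_pow_sub_one _ _
  have dvd_two : (q + 1 : ℤ) ∣ 2 := by
    rw [← dvd_neg]
    convert dvd_add dvd_neg_sub_one dvd_sub_one using 1
    ring
  have := Int.le_of_dvd two_pos dvd_two
  have := Fintype.one_lt_card (α := K)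
  lia

theorem weilSum_traceLift_eq {m : ℕ} (h : Module.finrank K F = 2 * m) {χ : AddChar K R}
    (hχ : χ.IsPrimitive) {c : F} (hc : c ≠ 0) :
    weilSum K (traceLift K F χ) c = (-q : R) ^ m ∨
      weilSum K (traceLift K F χ) c = (-q : R) ^ (m + 1) := by
  classical
  have even_finrank : Even (Module.finrank K F) := h ▸ even_two_mul m
  have sq_eq := weilSum_mul_weilSum_neg hχ even_finrank c
  rw [weilSum_neg even_finrank, ← sq, Module.card_eq_pow_finrank (K := K), h] at sq_eq
  obtain card_ker | card_ker :=
    card_filter_mul_add_mul_pow_card_sq_eq_zero even_finrank hc (pow_ne_zero q hc) <;>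
  rw [card_ker] at sq_eq
  · left
    refine weilSum_eq_neg_card_pow_of_sq_eq even_finrank _ _ (sq_eq.trans ?_)
    rw [← pow_mul', Even.neg_pow (even_two_mul m)]
    push_cast
    ring
  · right
    refine weilSum_eq_neg_card_pow_of_sq_eq even_finrank _ _ (sq_eq.trans ?_)
    rw [← pow_mul', Even.neg_pow (even_two_mul _)]
    push_cast
    ring

theorem card_weilSum_traceLift_eq {m : ℕ} (h : Module.finrank K F = 2 * m) {χ : AddChar K R}
    (hχ : χ.IsPrimitive) :
    (Nat.card {c : F // c ≠ 0 ∧ weilSum K (traceLift K F χ) c = (-q : R) ^ m} : R) =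
        q * (q ^ (2 * m) - 1) / (q + 1) ∧
      (Nat.card {c : F // c ≠ 0 ∧ weilSum K (traceLift K F χ) c = (-q : R) ^ (m + 1)} : R) =
        (q ^ (2 * m) - 1) / (q + 1) := by
  classical
  have card_ne_zero : (#{c : F | c ≠ 0} : R) = q ^ (2 * m) - 1 := by
    rw [Finset.filter_ne', Finset.cast_card_erase_of_mem (Finset.mem_univ _), Finset.card_univ,
      Module.card_eq_pow_finrank (K := K), h, Nat.cast_pow]
  simp only [Nat.card_eq_fintype_card, Fintype.card_subtype, ← Finset.filter_filter, pow_succ',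
    ← card_ne_zero]
  refine card_filter_of_sum_eq_zero
    (pow_ne_zero m (neg_ne_zero.mpr (Nat.cast_ne_zero.mpr Fintype.card_ne_zero)))
    (Nat.cast_add_one_ne_zero q) (fun c hc ↦ ?_)
    (sum_weilSum_ne_zero (isPrimitive_traceLift hχ))
  rw [← pow_succ']
  exact weilSum_traceLift_eq h hχ (Finset.mem_filter.mp hc).2

end WeilSumValue

section LambdaSum

variable {K E F R : Type*} [Field K] [Field E] [Field F] [Fintype F] [Algebra K E] [Algebra E F]
  [CommRing R]

/-- The sum `∑ χ₁(w N(x)) χ₂(b x)` over `x ∈ F`, where `N` is the norm from `F` to `E`. Rescaling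
`x` by a unit of `K` turns the inner sums of `Λ` into such sums. -/
noncomputable def normTwistSum (χ₁ : AddChar E R) (χ₂ : AddChar F R) (b : F) (w : Kˣ) : R :=
  ∑ x, χ₁ (algebraMap K E w * Algebra.norm E x) * χ₂ (b * x)

theorem normTwistSum_mul_algebraMap [Algebra K F] [IsScalarTower K E F]
    (χ₁ : AddChar E R) (χ₂ : AddChar F R) (b : F) (y z : Kˣ) :
    normTwistSum χ₁ χ₂ (b * algebraMap K F z) y =
      normTwistSum χ₁ χ₂ b (y * z⁻¹ ^ Module.finrank E F) := by
  have z_ne_zero : algebraMap K F z ≠ 0 := by simp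
  refine Fintype.sum_equiv (Equiv.mulLeft₀ _ z_ne_zero) _ _ fun x ↦ ?_
  simp only [Equiv.mulLeft₀_apply, map_mul]
  rw [IsScalarTower.algebraMap_apply K E F, Algebra.norm_algebraMap, mul_assoc b]
  congr 2
  simp
  field_simp

variable [Fintype K] [DecidableEq K]

local notation "q" => Fintype.card K

theorem sum_units_mulShift [IsDomain R] {χ : AddChar K R} (hχ : χ.IsPrimitive) (t : K) :
    ∑ w : Kˣ, χ (w * t) = (if t = 0 then (q : R) else 0) - 1 := by
  have sum_all := AddChar.sum_mulShift t hχ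
  rw [sum_eq_add_sum_units, zero_mul, AddChar.map_zero_eq_one] at sum_all
  rw [eq_sub_iff_add_eq', sum_all]
  push_cast
  rfl

theorem sum_normTwistSum_traceLift [IsDomain R] {χ : AddChar K R} (hχ : χ.IsPrimitive)
    {χ₂ : AddChar F R} (hχ₂ : χ₂.IsPrimitive) {b : F} (hb : b ≠ 0) :
    ∑ w : Kˣ, normTwistSum (traceLift K E χ) χ₂ b w =
      q * ∑ x with Algebra.trace K E (Algebra.norm E x) = 0, χ₂ (b * x) := by
  classical
  have sum_over_w (x : F) :
      ∑ w : Kˣ, traceLift K E χ (algebraMap K E w * Algebra.norm E x) * χ₂ (b * x) =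
        q * (if Algebra.trace K E (Algebra.norm E x) = 0 then χ₂ (b * x) else 0) -
          χ₂ (x * b) := by
    simp_rw [← Finset.sum_mul, traceLift_apply, ← Algebra.smul_def, map_smul, smul_eq_mul]
    rw [sum_units_mulShift hχ, mul_comm x b]
    split_ifs <;> ring
  simp only [normTwistSum]
  rw [Finset.sum_comm, Fintype.sum_congr _ _ sum_over_w, Finset.sum_sub_distrib,
    AddChar.sum_mulShift _ hχ₂, if_neg hb, Nat.cast_zero, sub_zero, ← Finset.mul_sum,
    Finset.sum_filter]

variable [Algebra K F]

/-- The exponential sum `Λ(b)` of the characters `χ`, `χ₁`, `χ₂` of `K`, `E`, `F`; the norm from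
`F` to `E` is the power `x ^ ((|F| - 1) / (|E| - 1))` of the classical formula. -/
noncomputable def lambdaSum (χ : AddChar K R) (χ₁ : AddChar E R) (χ₂ : AddChar F R)
    (a : K) (b : F) : R :=
  ∑ x : F, ∑ y : Kˣ, ∑ z : Kˣ,
    χ (a * y) * χ₁ (algebraMap K E y * Algebra.norm E x) * χ₂ (b * algebraMap K F z * x)

theorem lambdaSum_eq_neg_sum_normTwistSum [IsDomain R] [IsScalarTower K E F]
    (hcoprime : (q - 1).Coprime (Module.finrank E F)) {χ : AddChar K R} (hχ : χ.IsPrimitive)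
    (χ₁ : AddChar E R) (χ₂ : AddChar F R) {a : K} (ha : a ≠ 0) (b : F) :
    lambdaSum χ χ₁ χ₂ a b = -∑ w : Kˣ, normTwistSum χ₁ χ₂ b w := by
  have coprime_card_units : (Nat.card Kˣ).Coprime (Module.finrank E F) := by
    rwa [Nat.card_units, Nat.card_eq_fintype_card]
  have sum_over_z (y : Kˣ) : ∑ z : Kˣ, normTwistSum χ₁ χ₂ (b * algebraMap K F z) y =
      ∑ w : Kˣ, normTwistSum χ₁ χ₂ b w := by
    simp_rw [normTwistSum_mul_algebraMap]
    exact (((Equiv.inv Kˣ).trans (powCoprime coprime_card_units)).trans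
      (Equiv.mulLeft y)).sum_comp (normTwistSum χ₁ χ₂ b)
  calc lambdaSum χ χ₁ χ₂ a b
      = ∑ y : Kˣ, χ (a * y) * ∑ z : Kˣ, normTwistSum χ₁ χ₂ (b * algebraMap K F z) y := by
        simp only [lambdaSum, normTwistSum, Finset.mul_sum, ← mul_assoc]
        rw [Finset.sum_comm]
        exact Finset.sum_congr rfl fun y _ ↦ Finset.sum_comm
    _ = -∑ w : Kˣ, normTwistSum χ₁ χ₂ b w := by
        simp_rw [sum_over_z, ← Finset.sum_mul, mul_comm a]
        rw [sum_units_mulShift hχ, if_neg ha, zero_sub, neg_one_mul]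

end LambdaSum

section TraceZeroNorm

variable {K E : Type*} [Field K] [Field E] [Finite E] [Algebra K E]

theorem exists_ne_zero_trace_eq_zero (h : 1 < Module.finrank K E) :
    ∃ δ : E, δ ≠ 0 ∧ Algebra.trace K E δ = 0 := by
  have ker_ne_bot : LinearMap.ker (Algebra.trace K E) ≠ ⊥ :=
    LinearMap.ker_ne_bot_of_finrank_lt (by rwa [Module.finrank_self])
  obtain ⟨δ, hδ, δ_ne_zero⟩ := (Submodule.ne_bot_iff _).mp ker_ne_bot
  exact ⟨δ, δ_ne_zero, hδ⟩

variable [Fintype K]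

local notation "q" => Fintype.card K

theorem trace_mul_eq_zero_iff_pow_card_sub_one_eq_one (h : Module.finrank K E = 2) {δ v : E}
    (hδ₀ : δ ≠ 0) (hδ : Algebra.trace K E δ = 0) (hv : v ≠ 0) :
    Algebra.trace K E (δ * v) = 0 ↔ v ^ (q - 1) = 1 := by
  have pow_card_eq : v ^ q = v ^ (q - 1) * v := by
    rw [← pow_succ, Nat.sub_add_cancel Fintype.card_pos]
  rw [trace_eq_zero_iff_pow_card_eq_neg h] at hδ ⊢
  rw [mul_pow, hδ, neg_mul, neg_inj, mul_right_inj' hδ₀, pow_card_eq, mul_eq_right₀ hv]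

variable {F : Type*} [Field F] [Finite F] [Algebra E F] [Algebra K F] [IsScalarTower K E F]

theorem norm_pow_card_sub_one_eq_one_iff (h : Module.finrank K E = 2) (u : Fˣ) :
    Algebra.norm E (u : F) ^ (q - 1) = 1 ↔ ∃ v, v ^ (q + 1) = u := by
  have card_E : Nat.card E = q ^ 2 := by
    rw [Module.natCard_eq_pow_finrank (K := K), h, Nat.card_eq_fintype_card]
  have even_finrank : Even (Module.finrank K F) := by
    rw [← Module.finrank_mul_finrank K E F, h]
    exact even_two_mul _
  have exponent_eq : (Nat.card F - 1) / (Nat.card E - 1) * (q - 1) = Nat.card Fˣ / (q + 1) := by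
    obtain ⟨n, hn⟩ := card_add_one_mul_card_sub_one_dvd_card_units even_finrank
    have card_sub_one_pos : 0 < q - 1 := Nat.sub_pos_of_lt Fintype.one_lt_card
    have card_E_sub_one : Nat.card E - 1 = (q + 1) * (q - 1) := by
      rw [card_E]
      exact Nat.sq_sub_sq q 1
    rw [← Nat.card_units, hn, card_E_sub_one, Nat.mul_div_cancel_left _ (by positivity),
      mul_assoc, Nat.mul_div_cancel_left _ (Nat.succ_pos q), mul_comm]
  rw [exists_pow_eq_iff_pow_card_div_eq_one (card_add_one_dvd_card_units even_finrank),
    ← (algebraMap E F).injective.eq_iff, map_pow, FiniteField.algebraMap_norm_eq_pow, ← pow_mul,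
    exponent_eq, map_one, Units.ext_iff, Units.val_pow_eq_pow_val, Units.val_one]

variable (F) in
theorem exists_trace_norm_mul_eq_zero_iff (h : Module.finrank K E = 2) :
    ∃ x₀ : F, x₀ ≠ 0 ∧ ∀ u : Fˣ,
      Algebra.trace K E (Algebra.norm E (x₀ * u)) = 0 ↔ ∃ v, v ^ (q + 1) = u := by
  obtain ⟨δ, hδ₀, hδ⟩ := exists_ne_zero_trace_eq_zero (K := K) (E := E) (by lia)
  obtain ⟨x₀, rfl⟩ := FiniteField.norm_surjective E F δ
  refine ⟨x₀, Algebra.norm_ne_zero_iff.mp hδ₀, fun u ↦ ?_⟩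
  rw [map_mul, trace_mul_eq_zero_iff_pow_card_sub_one_eq_one h hδ₀ hδ
    (Algebra.norm_ne_zero_iff.mpr u.ne_zero), norm_pow_card_sub_one_eq_one_iff h]

end TraceZeroNorm

section LambdaValues

variable {K E F R : Type*} [Field K] [Field E] [Field F] [Fintype K] [DecidableEq K] [Finite E]
  [Fintype F] [Algebra K E] [Algebra E F] [Algebra K F] [IsScalarTower K E F] [Field R] [CharZero R]

local notation "q" => Fintype.card K

variable (F) in
theorem exists_sum_trace_norm_eq_zero_eq_weilSum (h : Module.finrank K E = 2) :
    ∃ x₀ : F, x₀ ≠ 0 ∧ ∀ (χ₂ : AddChar F R) (b : F),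
      ∑ x with Algebra.trace K E (Algebra.norm E x) = 0, χ₂ (b * x) =
        (q + weilSum K χ₂ (b * x₀)) / (q + 1) := by
  classical
  obtain ⟨x₀, hx₀, trace_norm_iff⟩ := exists_trace_norm_mul_eq_zero_iff (K := K) (E := E) F h
  refine ⟨x₀, hx₀, fun χ₂ b ↦ ?_⟩
  have even_finrank : Even (Module.finrank K F) := by
    rw [← Module.finrank_mul_finrank K E F, h]
    exact even_two_mul _
  rw [eq_div_iff (Nat.cast_add_one_ne_zero q), weilSum_eq_one_add even_finrank, Finset.sum_filter,
    ← Equiv.sum_comp (Equiv.mulLeft₀ x₀ hx₀), sum_eq_add_sum_units]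
  simp only [Equiv.mulLeft₀_apply, trace_norm_iff, mul_zero, Algebra.norm_zero, map_zero,
    AddChar.map_zero_eq_one, if_true, ← Finset.sum_filter, mul_assoc]
  ring

variable (F) in
theorem exists_lambdaSum_eq_weilSum (h : Module.finrank K E = 2)
    (hcoprime : (q - 1).Coprime (Module.finrank E F)) {χ : AddChar K R} (hχ : χ.IsPrimitive)
    {a : K} (ha : a ≠ 0) :
    ∃ x₀ : F, x₀ ≠ 0 ∧ ∀ b : F, b ≠ 0 →
      lambdaSum χ (traceLift K E χ) (traceLift K F χ) a b =
        -q * (q + weilSum K (traceLift K F χ) (b * x₀)) / (q + 1) := by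
  obtain ⟨x₀, hx₀, sum_eq⟩ :=
    exists_sum_trace_norm_eq_zero_eq_weilSum (K := K) (E := E) (R := R) F h
  refine ⟨x₀, hx₀, fun b hb ↦ ?_⟩
  rw [lambdaSum_eq_neg_sum_normTwistSum hcoprime hχ _ _ ha,
    sum_normTwistSum_traceLift hχ (isPrimitive_traceLift hχ) hb, sum_eq]
  ring

theorem card_lambdaSum_eq (h : Module.finrank K E = 2)
    (hcoprime : (q - 1).Coprime (Module.finrank E F)) {χ : AddChar K R} (hχ : χ.IsPrimitive)
    {a : K} (ha : a ≠ 0) (W : R) :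
    Nat.card {b : F // b ≠ 0 ∧ lambdaSum χ (traceLift K E χ) (traceLift K F χ) a b =
        -q * (q + W) / (q + 1)} =
      Nat.card {c : F // c ≠ 0 ∧ weilSum K (traceLift K F χ) c = W} := by
  obtain ⟨x₀, hx₀, lambdaSum_eq⟩ := exists_lambdaSum_eq_weilSum F h hcoprime hχ ha
  have card_ne_zero : (-q : R) ≠ 0 := neg_ne_zero.mpr (Nat.cast_ne_zero.mpr Fintype.card_ne_zero)
  refine Nat.card_congr (Equiv.subtypeEquiv (Equiv.mulRight₀ x₀ hx₀) fun b ↦ ?_)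
  rw [Equiv.mulRight₀_apply, mul_ne_zero_iff_right hx₀]
  refine and_congr_right fun hb ↦ ?_
  rw [lambdaSum_eq b hb, div_left_inj' (Nat.cast_add_one_ne_zero q), mul_right_inj' card_ne_zero,
    add_right_inj]

end LambdaValues

theorem stmt12_general {K E F R : Type*} [Field K] [Field E] [Field F] [Field R] [CharZero R]
    [Fintype K] [Fintype E] [Fintype F] [DecidableEq K]
    [Algebra K E] [Algebra E F] [Algebra K F] [IsScalarTower K E F]
    {q k : ℕ} (hK : Fintype.card K = q) (hE : Fintype.card E = q ^ 2) (hF : Fintype.card F = q ^ k)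
    (hgcd : (k / 2).gcd (q - 1) = 1) {χ : AddChar K R} (hχ : χ.IsPrimitive) {a : K} (ha : a ≠ 0) :
    (Nat.card {b : F // b ≠ 0 ∧ lambdaSum χ (traceLift K E χ) (traceLift K F χ) a b =
        (-(q : R) ^ 2 + (-1 : R) ^ (k / 2) * (q : R) ^ (k / 2 + 2)) / ((q : R) + 1)} : R) =
      ((q : R) ^ k - 1) / ((q : R) + 1) ∧
    (Nat.card {b : F // b ≠ 0 ∧ lambdaSum χ (traceLift K E χ) (traceLift K F χ) a b =
        (-(q : R) ^ 2 + (-1 : R) ^ (k / 2 - 1) * (q : R) ^ (k / 2 + 1)) / ((q : R) + 1)} : R) =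
      (q : R) * ((q : R) ^ k - 1) / ((q : R) + 1) := by
  subst hK
  have finrank_KE : Module.finrank K E = 2 :=
    Nat.pow_right_injective Fintype.one_lt_card (Module.card_eq_pow_finrank.symm.trans hE)
  have finrank_KF : Module.finrank K F = k :=
    Nat.pow_right_injective Fintype.one_lt_card (Module.card_eq_pow_finrank.symm.trans hF)
  obtain ⟨j, hj⟩ : ∃ j, Module.finrank E F = j + 1 :=
    Nat.exists_eq_add_one.mpr Module.finrank_pos
  obtain rfl : k = 2 * (j + 1) := by
    rw [← finrank_KF, ← hj, ← finrank_KE, Module.finrank_mul_finrank]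
  rw [Nat.mul_div_cancel_left _ two_pos, ← hj] at hgcd
  have value_eq (i : ℕ) :
      -(Fintype.card K : R) ^ 2 + (-1) ^ i * (Fintype.card K : R) ^ (i + 2) =
        -Fintype.card K * (Fintype.card K + (-Fintype.card K) ^ (i + 1)) := by
    rw [neg_pow (Fintype.card K : R)]
    ring
  obtain ⟨card_eq, card_eq_succ⟩ := card_weilSum_traceLift_eq finrank_KF hχ
  have card_eq_card_weilSum := card_lambdaSum_eq (F := F) finrank_KE (Nat.Coprime.symm hgcd) hχ ha
  rw [Nat.mul_div_cancel_left _ two_pos, Nat.add_sub_cancel, value_eq (j + 1), value_eq j,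
    card_eq_card_weilSum, card_eq_card_weilSum]
  exact ⟨card_eq_succ, card_eq⟩

/-- **Lemma 8.** Let `q` be a power of a prime `p`, `k` even positive with
`gcd(k/2, q-1) = 1`, `a ∈ F_qˣ`, and `χ, χ₁, χ₂` the canonical additive characters of
`F_q, F_{q²}, F_{q^k}`.  With
`Λ(b) = ∑_{x ∈ F_{q^k}} ∑_{y ∈ F_qˣ} ∑_{z ∈ F_qˣ} χ(ay) χ₁(y·x^{(q^k-1)/(q²-1)}) χ₂(bzx)`,
as `b` runs over `F_{q^k}ˣ`, `Λ(b)` takes the value `(−q² + (−1)^{k/2} q^{k/2+2})/(q+1)`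
exactly `(q^k−1)/(q+1)` times and the value `(−q² + (−1)^{k/2−1} q^{k/2+1})/(q+1)`
exactly `q(q^k−1)/(q+1)` times.
Here `x^{(q^k-1)/(q²-1)}` is the norm from `Fk` to `Ff` (hypothesis `hnorm`). -/
theorem stmt12 (p e q k : ℕ) [Fact p.Prime] (he : 0 < e) (hq : q = p ^ e)
    (hk : 0 < k) (hke : Even k) (hgcd : Nat.gcd (k / 2) (q - 1) = 1)
    (Fq Ff Fk : Type) [Field Fq] [Field Ff] [Field Fk]
    [Fintype Fq] [Fintype Ff] [Fintype Fk] [DecidableEq Fq]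
    [Algebra Fq Ff] [Algebra Ff Fk] [Algebra Fq Fk] [IsScalarTower Fq Ff Fk]
    [Algebra (ZMod p) Fq] [Algebra (ZMod p) Ff] [Algebra (ZMod p) Fk]
    (hcq : Fintype.card Fq = q) (hcf : Fintype.card Ff = q ^ 2)
    (hck : Fintype.card Fk = q ^ k)
    (hnorm : ∀ x : Fk,
      algebraMap Ff Fk (Algebra.norm Ff x) = x ^ ((q ^ k - 1) / (q ^ 2 - 1)))
    (χ : AddChar Fq ℂ)
    (hχ : ∀ x : Fq, χ x =
      Complex.exp (2 * Real.pi * Complex.I * ((Algebra.trace (ZMod p) Fq x).val : ℂ) / p))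
    (χ₁ : AddChar Ff ℂ)
    (hχ₁ : ∀ x : Ff, χ₁ x =
      Complex.exp (2 * Real.pi * Complex.I * ((Algebra.trace (ZMod p) Ff x).val : ℂ) / p))
    (χ₂ : AddChar Fk ℂ)
    (hχ₂ : ∀ x : Fk, χ₂ x =
      Complex.exp (2 * Real.pi * Complex.I * ((Algebra.trace (ZMod p) Fk x).val : ℂ) / p))
    (a : Fq) (ha : a ≠ 0) :
    (Nat.card {b : Fk // b ≠ 0 ∧
        (∑ x : Fk, ∑ y : Fqˣ, ∑ z : Fqˣ,
            χ (a * y) * χ₁ (algebraMap Fq Ff (y : Fq) * Algebra.norm Ff x) *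
              χ₂ (b * algebraMap Fq Fk (z : Fq) * x))
          = (-(q : ℂ) ^ 2 + (-1 : ℂ) ^ (k / 2) * (q : ℂ) ^ (k / 2 + 2)) / ((q : ℂ) + 1)} : ℂ)
      = ((q : ℂ) ^ k - 1) / ((q : ℂ) + 1) ∧
    (Nat.card {b : Fk // b ≠ 0 ∧
        (∑ x : Fk, ∑ y : Fqˣ, ∑ z : Fqˣ,
            χ (a * y) * χ₁ (algebraMap Fq Ff (y : Fq) * Algebra.norm Ff x) *
              χ₂ (b * algebraMap Fq Fk (z : Fq) * x))
          = (-(q : ℂ) ^ 2 + (-1 : ℂ) ^ (k / 2 - 1) * (q : ℂ) ^ (k / 2 + 1)) / ((q : ℂ) + 1)} : ℂ)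
      = (q : ℂ) * ((q : ℂ) ^ k - 1) / ((q : ℂ) + 1) := by
  obtain rfl := eq_canonicalAddChar hχ
  obtain rfl := eq_canonicalAddChar hχ₁
  obtain rfl := eq_canonicalAddChar hχ₂
  rw [← traceLift_canonicalAddChar (K := Fq) (L := Ff) p,
    ← traceLift_canonicalAddChar (K := Fq) (L := Fk) p]
  exact stmt12_general hcq hcf hck hgcd (isPrimitive_canonicalAddChar p) ha
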